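/- Property 5.1(II): let G be a finite directed graph, v a vertex, and (k_v, l_v) a skyline coreness of v. Then it cannot simultaneously hold that v has at least k_v + 1 in-neighbors v' each having a skyline coreness (k',l') with k_v + 1 ≤ k' and l_v ≤ l', and that v has at least l_v out-neighbors v'' each having a skyline coreness (k'',l'') with k_v + 1 ≤ k'' and l_v ≤ l''. -/

import Mathlib

open Finset

variable {V : Type*} [Fintype V] [DecidableEq V]

/-- The in-neighbors of `v` within `S`: vertices `u ∈ S` with an edge `u → v`. -/
def inN (E : V → V → Prop) [DecidableRel E] (S : Finset V) (v : V) : Finset V :=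
  S.filter (fun u => E u v)

/-- The out-neighbors of `v` within `S`: vertices `u ∈ S` with an edge `v → u`. -/
def outN (E : V → V → Prop) [DecidableRel E] (S : Finset V) (v : V) : Finset V :=
  S.filter (fun u => E v u)

/-- `S` satisfies the `(k,l)`-degree constraints: every `v ∈ S` has at least `k`
in-neighbors in `S` and at least `l` out-neighbors in `S`. -/
def satisfiesKL (E : V → V → Prop) [DecidableRel E] (k l : ℕ) (S : Finset V) : Prop :=
  ∀ v ∈ S, k ≤ (inN E S v).card ∧ l ≤ (outN E S v).card

instance (E : V → V → Prop) [DecidableRel E] (k l : ℕ) (S : Finset V) :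
    Decidable (satisfiesKL E k l S) := by unfold satisfiesKL; infer_instance

/-- The `(k,l)`-core of the graph: the union of all vertex subsets satisfying the
`(k,l)`-degree constraints. -/
def core (E : V → V → Prop) [DecidableRel E] (k l : ℕ) : Finset V :=
  (Finset.univ.powerset.filter (satisfiesKL E k l)).sup id

/-- `kmax E v`: the largest `k` such that `v` belongs to the `(k,0)`-core. -/
noncomputable def kmax (E : V → V → Prop) [DecidableRel E] (v : V) : ℕ :=
  sSup {k : ℕ | v ∈ core E k 0}

/-- `lmax E v k`: the largest `l` such that `v` belongs to the `(k,l)`-core. -/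
noncomputable def lmax (E : V → V → Prop) [DecidableRel E] (v : V) (k : ℕ) : ℕ :=
  sSup {l : ℕ | v ∈ core E k l}

/-- The H-index of a finite multiset of naturals: the largest `h` such that at least
`h` elements (with multiplicity) are `≥ h`. -/
noncomputable def hIndex (M : Multiset ℕ) : ℕ :=
  sSup {h : ℕ | h ≤ (M.filter (fun x => h ≤ x)).card}

/-- The `n`-order in-H-index of a vertex `v` in the graph with vertex set `S`
and edge relation `E`. -/
noncomputable def iH (E : V → V → Prop) [DecidableRel E] (S : Finset V) : ℕ → V → ℕ
  | 0 => fun v => (inN E S v).card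
  | n + 1 => fun v => hIndex ((inN E S v).val.map (iH E S n))

/-- The `n`-order out-H-index of a vertex `v` in the graph with vertex set `S`
and edge relation `E`. -/
noncomputable def oH (E : V → V → Prop) [DecidableRel E] (S : Finset V) : ℕ → V → ℕ
  | 0 => fun v => (outN E S v).card
  | n + 1 => fun v => hIndex ((outN E S v).val.map (oH E S n))

/-- The eventual (limit) value of the in-H-index sequence. -/
noncomputable def iHlim (E : V → V → Prop) [DecidableRel E] (S : Finset V) (v : V) : ℕ :=
  ⨅ n, iH E S n v

/-- The eventual (limit) value of the out-H-index sequence. -/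
noncomputable def oHlim (E : V → V → Prop) [DecidableRel E] (S : Finset V) (v : V) : ℕ :=
  ⨅ n, oH E S n v

/-- `(k,l)` is a skyline coreness of `v`: `v` is in the `(k,l)`-core and there is no
pair `(k',l')` strictly dominating `(k,l)` with `v` in the `(k',l')`-core. -/
def skyline (E : V → V → Prop) [DecidableRel E] (v : V) (p : ℕ × ℕ) : Prop :=
  v ∈ core E p.1 p.2 ∧
    ¬ ∃ q : ℕ × ℕ, (p.1 ≤ q.1 ∧ p.2 ≤ q.2 ∧ p ≠ q) ∧ v ∈ core E q.1 q.2

/-! Adjoining to the `(k,l)`-core a vertex with at least `k` in-neighbors and `l` out-neighbors in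
it gives a set that still satisfies the `(k,l)`-degree constraints, so such a vertex already lies in
the core. A vertex with a skyline coreness dominating `(k,l)` lies in the `(k,l)`-core, so the two
neighbor counts, taken at `(kv + 1, lv)`, would put `v` in the `(kv + 1, lv)`-core and contradict
the maximality of `(kv, lv)`. -/

section DegreeConstraints

variable {E : V → V → Prop} [DecidableRel E] {S T : Finset V} {k l k' l' : ℕ} {v : V}

omit [Fintype V] [DecidableEq V] in
theorem inN_subset_inN (hST : S ⊆ T) (v : V) : inN E S v ⊆ inN E T v :=
  filter_subset_filter _ hST

omit [Fintype V] [DecidableEq V] in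
theorem outN_subset_outN (hST : S ⊆ T) (v : V) : outN E S v ⊆ outN E T v :=
  filter_subset_filter _ hST

omit [Fintype V] [DecidableEq V] in
theorem satisfiesKL.anti (hS : satisfiesKL E k' l' S) (hk : k ≤ k') (hl : l ≤ l') :
    satisfiesKL E k l S :=
  fun v hv => ⟨hk.trans (hS v hv).1, hl.trans (hS v hv).2⟩

omit [Fintype V] in
theorem satisfiesKL.insert (hS : satisfiesKL E k l S) (hin : k ≤ #(inN E S v))
    (hout : l ≤ #(outN E S v)) : satisfiesKL E k l (insert v S) := by
  intro u hu
  have hdeg : k ≤ #(inN E S u) ∧ l ≤ #(outN E S u) := by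
    rcases mem_insert.1 hu with rfl | huS
    · exact ⟨hin, hout⟩
    · exact hS u huS
  have hsub := subset_insert v S
  exact ⟨hdeg.1.trans (card_le_card (inN_subset_inN hsub u)),
    hdeg.2.trans (card_le_card (outN_subset_outN hsub u))⟩

omit [Fintype V] [DecidableEq V] in
theorem ncard_setOf_and_le_card_filter {P Q : V → Prop} [DecidablePred P]
    (hQS : ∀ u, Q u → u ∈ S) : Set.ncard {u | P u ∧ Q u} ≤ #{u ∈ S | P u} := by
  rw [← Set.ncard_coe_finset]
  refine Set.ncard_le_ncard ?_ (finite_toSet _)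
  rintro u ⟨hP, hQ⟩
  exact mem_coe.2 (mem_filter.2 ⟨hQS u hQ, hP⟩)

end DegreeConstraints

section Core

variable {E : V → V → Prop} [DecidableRel E] {S : Finset V} {k l k' l' : ℕ} {v : V}

theorem mem_core : v ∈ core E k l ↔ ∃ S, satisfiesKL E k l S ∧ v ∈ S := by
  simp [core, mem_sup]

theorem satisfiesKL.subset_core (hS : satisfiesKL E k l S) : S ⊆ core E k l :=
  fun _ hv => mem_core.2 ⟨S, hS, hv⟩

theorem core_subset_core (hk : k ≤ k') (hl : l ≤ l') : core E k' l' ⊆ core E k l := by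
  intro v hv
  obtain ⟨S, hS, hvS⟩ := mem_core.1 hv
  exact (hS.anti hk hl).subset_core hvS

theorem satisfiesKL_core (E : V → V → Prop) [DecidableRel E] (k l : ℕ) :
    satisfiesKL E k l (core E k l) := by
  intro v hv
  obtain ⟨S, hS, hvS⟩ := mem_core.1 hv
  exact ⟨(hS v hvS).1.trans (card_le_card (inN_subset_inN hS.subset_core v)),
    (hS v hvS).2.trans (card_le_card (outN_subset_outN hS.subset_core v))⟩

theorem mem_core_of_le_card (hin : k ≤ #(inN E (core E k l) v))
    (hout : l ≤ #(outN E (core E k l) v)) : v ∈ core E k l :=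
  ((satisfiesKL_core E k l).insert hin hout).subset_core (mem_insert_self v _)

end Core

section Skyline

variable {E : V → V → Prop} [DecidableRel E] {v : V} {p : ℕ × ℕ} {k l : ℕ}

theorem skyline.mem_core_of_le (h : skyline E v p) (hk : k ≤ p.1) (hl : l ≤ p.2) :
    v ∈ core E k l :=
  core_subset_core hk hl h.1

theorem skyline.notMem_core_of_lt (h : skyline E v p) (hp : p < (k, l)) : v ∉ core E k l :=
  fun hv => h.2 ⟨(k, l), ⟨hp.le.1, hp.le.2, hp.ne⟩, hv⟩

end Skyline

theorem skyline_neighbor_property_II_general {E : V → V → Prop} [DecidableRel E]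
    {v : V} {k l : ℕ} (hv : v ∉ core E k l) :
    ¬(k ≤ Set.ncard {u : V | E u v ∧ ∃ p : ℕ × ℕ, skyline E u p ∧ k ≤ p.1 ∧ l ≤ p.2} ∧
      l ≤ Set.ncard {u : V | E v u ∧ ∃ p : ℕ × ℕ, skyline E u p ∧ k ≤ p.1 ∧ l ≤ p.2}) := by
  rintro ⟨hin, hout⟩
  have mem_core_of_dominating (u : V) :
      (∃ p : ℕ × ℕ, skyline E u p ∧ k ≤ p.1 ∧ l ≤ p.2) → u ∈ core E k l :=
    fun ⟨_, hp, hk, hl⟩ => hp.mem_core_of_le hk hl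
  exact hv (mem_core_of_le_card
    (hin.trans (ncard_setOf_and_le_card_filter mem_core_of_dominating))
    (hout.trans (ncard_setOf_and_le_card_filter mem_core_of_dominating)))

/-- **Property 5.1(II).** If `(kv,lv)` is a skyline coreness of `v`, then
it cannot hold simultaneously that `v` has `kv + 1` in-neighbors with a skyline coreness
dominating `(kv+1, lv)` and `lv` out-neighbors with a skyline coreness dominating
`(kv+1, lv)`. -/
theorem skyline_neighbor_property_II (E : V → V → Prop) [DecidableRel E]
    (v : V) (kv lv : ℕ) (h : skyline E v (kv, lv)) :
    ¬(kv + 1 ≤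
        Set.ncard {u : V | E u v ∧ ∃ p : ℕ × ℕ, skyline E u p ∧ kv + 1 ≤ p.1 ∧ lv ≤ p.2} ∧
      lv ≤
        Set.ncard {u : V | E v u ∧ ∃ p : ℕ × ℕ, skyline E u p ∧ kv + 1 ≤ p.1 ∧ lv ≤ p.2}) :=
  skyline_neighbor_property_II_general
    (h.notMem_core_of_lt (Prod.mk_lt_mk_iff_left.2 kv.lt_succ_self))
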